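/- For all real x with 0 < x < 1, one has (1/8)·x·Φ(x⁴, 3/2, 1/4) < arcsl(x) < (1/4)·x·Φ(x⁴, 3/2, 1/4). -/

import Mathlib

/-- The arc lemniscate sine function: `arcsl x = ∫₀ˣ dt / √(1 - t⁴)`. -/
noncomputable def arcsl (x : ℝ) : ℝ := ∫ t in (0:ℝ)..x, 1 / Real.sqrt (1 - t ^ 4)

/-- The Lerch zeta function: `Φ(z, s, a) = ∑ₖ zᵏ / (k + a)ˢ`. -/
noncomputable def lerchPhi (z s a : ℝ) : ℝ := ∑' k : ℕ, z ^ k / ((k : ℝ) + a) ^ s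

/-!
Integrating the binomial series of `(1 - t ^ 4) ^ (-1/2)` termwise gives
`arcsl x = ∑ cₙ x ^ (4n+1) / (4n+1)` with `cₙ = Ring.multichoose (1/2) n`, while
`x / 4 * Φ(x ^ 4, 3/2, 1/4) = ∑ dₙ x ^ (4n+1) / (4n+1)` with `dₙ = 1 / √(n + 1/4)`.
Both bounds thus follow from `dₙ / 2 ≤ cₙ < dₙ`, strict on the left for `n ≠ 0`. As
`cₙ₊₁ = (n + 1/2) / (n + 1) * cₙ`, the sequence `(4n+1) cₙ²` increases from `1` and `(2n+1) cₙ²`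
decreases from `1`, so `1/4 ≤ (n + 1/4) cₙ² < (2n+1) cₙ² ≤ 1`.
-/

open MeasureTheory Set

lemma succ_nsmul_multichoose_succ {R : Type*} [Ring R] [BinomialRing R] (r : R) (n : ℕ) :
    (n + 1) • Ring.multichoose r (n + 1) = Ring.multichoose r n * (r + n) := by
  have : IsAddTorsionFree R := BinomialRing.toIsAddTorsionFree
  apply nsmul_right_injective n.factorial_ne_zero
  calc n.factorial • (n + 1) • Ring.multichoose r (n + 1)
      = (ascPochhammer ℕ (n + 1)).smeval r := by
        rw [← Ring.factorial_nsmul_multichoose_eq_ascPochhammer, smul_smul, mul_comm,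
          Nat.factorial_succ]
    _ = n.factorial • (Ring.multichoose r n * (r + n)) := by
        rw [ascPochhammer_succ_right, Polynomial.smeval_mul,
          ← Ring.factorial_nsmul_multichoose_eq_ascPochhammer, Polynomial.smeval_add,
          Polynomial.smeval_X, Polynomial.smeval_natCast, pow_one, pow_zero, nsmul_one,
          smul_mul_assoc]

lemma multichoose_pos {r : ℝ} (hr : 0 < r) (n : ℕ) : 0 < Ring.multichoose r n := by
  have h := Ring.factorial_nsmul_multichoose_eq_ascPochhammer r n
  rw [Polynomial.ascPochhammer_smeval_eq_eval] at h
  exact pos_of_smul_pos_left (h ▸ ascPochhammer_pos n r hr) (Nat.zero_le _)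

lemma hasSum_multichoose_mul_pow (r : ℝ) {u : ℝ} (hu : |u| < 1) :
    HasSum (fun n ↦ Ring.multichoose r n * u ^ n) (1 / (1 - u) ^ r) := by
  have hmem : u ∈ Metric.eball (0 : ℝ) 1 := by
    simpa [enorm_eq_nnnorm, ← NNReal.coe_lt_coe] using hu
  simpa [Ring.multichoose_eq, FormalMultilinearSeries.ofScalars, mul_comm] using
    (Real.one_div_one_sub_rpow_hasFPowerSeriesOnBall_zero r).hasSum hmem

lemma multichoose_half_succ_sq (n : ℕ) :
    Ring.multichoose (1 / 2 : ℝ) (n + 1) ^ 2 =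
      ((n + 1 / 2) / (n + 1)) ^ 2 * Ring.multichoose (1 / 2 : ℝ) n ^ 2 := by
  have h := succ_nsmul_multichoose_succ (1 / 2 : ℝ) n
  rw [nsmul_eq_mul, Nat.cast_add_one] at h
  rw [← mul_pow]
  congr 1
  field_simp
  linear_combination 2 * h

lemma strictMono_mul_multichoose_half_sq :
    StrictMono fun n : ℕ ↦ (4 * n + 1) * Ring.multichoose (1 / 2 : ℝ) n ^ 2 := by
  refine strictMono_nat_of_lt_succ fun n ↦ ?_
  rw [multichoose_half_succ_sq, ← mul_assoc]
  have hc := multichoose_pos (r := 1 / 2) (by norm_num) n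
  refine mul_lt_mul_of_pos_right ?_ (by positivity)
  rw [div_pow, mul_div_assoc', lt_div_iff₀ (by positivity)]
  push_cast
  linarith

lemma strictAnti_mul_multichoose_half_sq :
    StrictAnti fun n : ℕ ↦ (2 * n + 1) * Ring.multichoose (1 / 2 : ℝ) n ^ 2 := by
  refine strictAnti_nat_of_succ_lt fun n ↦ ?_
  rw [multichoose_half_succ_sq, ← mul_assoc]
  have hc := multichoose_pos (r := 1 / 2) (by norm_num) n
  refine mul_lt_mul_of_pos_right ?_ (by positivity)
  rw [div_pow, mul_div_assoc', div_lt_iff₀ (by positivity)]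
  push_cast
  nlinarith [n.cast_nonneg (α := ℝ)]

lemma half_mul_inv_sqrt_lt_multichoose_half {n : ℕ} (hn : n ≠ 0) :
    1 / 2 * (√(n + 1 / 4))⁻¹ < Ring.multichoose (1 / 2 : ℝ) n := by
  have hc := multichoose_pos (r := 1 / 2) (by norm_num) n
  have hsq : 1 < (4 * n + 1) * Ring.multichoose (1 / 2 : ℝ) n ^ 2 := by
    simpa using strictMono_mul_multichoose_half_sq hn.bot_lt
  rw [← div_eq_mul_inv, div_lt_iff₀ (by positivity)]
  refine lt_of_pow_lt_pow_left₀ 2 (by positivity) ?_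
  rw [mul_pow, Real.sq_sqrt (by positivity)]
  linarith

lemma half_mul_inv_sqrt_le_multichoose_half (n : ℕ) :
    1 / 2 * (√(n + 1 / 4))⁻¹ ≤ Ring.multichoose (1 / 2 : ℝ) n := by
  rcases eq_or_ne n 0 with rfl | hn
  · have hsqrt : √((0 : ℕ) + 1 / 4 : ℝ) = 1 / 2 := by
      rw [Real.sqrt_eq_iff_mul_self_eq] <;> norm_num
    rw [hsqrt, Ring.multichoose_zero_right]
    norm_num
  · exact (half_mul_inv_sqrt_lt_multichoose_half hn).le

lemma multichoose_half_lt_inv_sqrt (n : ℕ) :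
    Ring.multichoose (1 / 2 : ℝ) n < (√(n + 1 / 4))⁻¹ := by
  have hc := multichoose_pos (r := 1 / 2) (by norm_num) n
  have hsq : (2 * n + 1) * Ring.multichoose (1 / 2 : ℝ) n ^ 2 ≤ 1 := by
    simpa using strictAnti_mul_multichoose_half_sq.antitone n.zero_le
  rw [← one_div, lt_div_iff₀ (by positivity)]
  refine lt_of_pow_lt_pow_left₀ 2 zero_le_one ?_
  rw [mul_pow, Real.sq_sqrt (by positivity)]
  nlinarith [pow_pos hc 2]

lemma hasSum_lerchPhi {z s a : ℝ} (hz : |z| ≤ 1) (hs : 1 < s) (ha : 0 ≤ a) :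
    HasSum (fun k : ℕ ↦ z ^ k / (k + a) ^ s) (lerchPhi z s a) := by
  refine Summable.hasSum (.of_norm_bounded ((Real.summable_one_div_nat_add_rpow a s).2 hs) ?_)
  intro k
  have hka : 0 ≤ k + a := by positivity
  rw [norm_div, norm_pow, Real.norm_eq_abs, Real.norm_of_nonneg (by positivity), abs_of_nonneg hka]
  gcongr
  exact pow_le_one₀ (abs_nonneg z) hz

lemma hasSum_quarter_mul_lerchPhi {x : ℝ} (hx : |x| ≤ 1) :
    HasSum (fun n : ℕ ↦ (√(n + 1 / 4))⁻¹ * (x ^ (4 * n + 1) / (4 * n + 1)))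
      (1 / 4 * x * lerchPhi (x ^ 4) (3 / 2) (1 / 4)) := by
  have hx4 : |x ^ 4| ≤ 1 := by
    rw [abs_pow]
    exact pow_le_one₀ (abs_nonneg x) hx
  convert! (hasSum_lerchPhi hx4 (s := 3 / 2) (a := 1 / 4) (by norm_num)
    (by norm_num)).mul_left (1 / 4 * x) using 2 with n
  have hrpow : ((n : ℝ) + 1 / 4) ^ (3 / 2 : ℝ) = (4 * n + 1) / 4 * √(n + 1 / 4) := by
    rw [show (3 / 2 : ℝ) = 1 + 1 / 2 by norm_num, Real.rpow_add (by positivity), Real.rpow_one,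
      ← Real.sqrt_eq_rpow]
    ring
  rw [hrpow, ← pow_mul]
  field_simp
  ring

lemma hasSum_integral_mul_pow_of_nonneg {ι : Type*} [Countable ι] {c : ι → ℝ} {e : ι → ℕ}
    {f : ℝ → ℝ} {x : ℝ} (hx : 0 ≤ x) (hc : ∀ i, 0 ≤ c i)
    (hf : ∀ t ∈ Ioo 0 x, HasSum (fun i ↦ c i * t ^ e i) (f t))
    (hsum : Summable fun i ↦ c i * (x ^ (e i + 1) / (e i + 1))) :
    HasSum (fun i ↦ c i * (x ^ (e i + 1) / (e i + 1))) (∫ t in 0..x, f t) := by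
  have hterm (i : ι) : ∫ t in Ioo 0 x, c i * t ^ e i = c i * (x ^ (e i + 1) / (e i + 1)) := by
    rw [← integral_Ioc_eq_integral_Ioo, ← intervalIntegral.integral_of_le hx,
      intervalIntegral.integral_const_mul, integral_pow, zero_pow (e i).succ_ne_zero, sub_zero]
  have hnorm (i : ι) : ∫ t in Ioo 0 x, ‖c i * t ^ e i‖ = ∫ t in Ioo 0 x, c i * t ^ e i :=
    setIntegral_congr_fun measurableSet_Ioo fun t ht ↦
      Real.norm_of_nonneg (mul_nonneg (hc i) (pow_nonneg ht.1.le _))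
  have hint (i : ι) : IntegrableOn (fun t ↦ c i * t ^ e i) (Ioo 0 x) :=
    (Continuous.integrableOn_Icc (by fun_prop)).mono_set Ioo_subset_Icc_self
  have key := hasSum_integral_of_summable_integral_norm hint (by simpa only [hnorm, hterm])
  rw [setIntegral_congr_fun measurableSet_Ioo fun t ht ↦ (hf t ht).tsum_eq] at key
  rw [intervalIntegral.integral_of_le hx, integral_Ioc_eq_integral_Ioo]
  simpa only [hterm] using key

lemma hasSum_arcsl {x : ℝ} (hx0 : 0 ≤ x) (hx1 : x ≤ 1) :
    HasSum (fun n : ℕ ↦ Ring.multichoose (1 / 2 : ℝ) n * (x ^ (4 * n + 1) / (4 * n + 1)))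
      (arcsl x) := by
  have hc (n : ℕ) : 0 < Ring.multichoose (1 / 2 : ℝ) n := multichoose_pos (by norm_num) n
  have hsum : Summable fun n : ℕ ↦
      Ring.multichoose (1 / 2 : ℝ) n * (x ^ (4 * n + 1) / (4 * n + 1)) := by
    refine .of_nonneg_of_le (fun n ↦ mul_nonneg (hc n).le (by positivity)) (fun n ↦ ?_)
      (hasSum_quarter_mul_lerchPhi (abs_le.2 ⟨by linarith, hx1⟩)).summable
    gcongr
    exact (multichoose_half_lt_inv_sqrt n).le
  have hseries : ∀ t ∈ Ioo 0 x, HasSum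
      (fun n : ℕ ↦ Ring.multichoose (1 / 2 : ℝ) n * t ^ (4 * n)) (1 / √(1 - t ^ 4)) := by
    intro t ht
    have ht4 : |t ^ 4| < 1 := by
      rw [abs_pow, abs_of_pos ht.1]
      exact pow_lt_one₀ ht.1.le (ht.2.trans_le hx1) four_ne_zero
    simpa only [pow_mul, Real.sqrt_eq_rpow] using hasSum_multichoose_mul_pow (1 / 2) ht4
  simpa [arcsl] using hasSum_integral_mul_pow_of_nonneg hx0 (fun n ↦ (hc n).le) hseries
    (by simpa using hsum)

theorem mahmoud_agarwal_bounds_general {x : ℝ} (hx0 : 0 < x) (hx1 : x ≤ 1) :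
    (1 / 8) * x * lerchPhi (x ^ 4) (3 / 2) (1 / 4) < arcsl x ∧
      arcsl x < (1 / 4) * x * lerchPhi (x ^ 4) (3 / 2) (1 / 4) := by
  have harcsl := hasSum_arcsl hx0.le hx1
  have hlerch := hasSum_quarter_mul_lerchPhi (abs_le.2 ⟨by linarith, hx1⟩)
  have hpos (n : ℕ) : 0 < x ^ (4 * n + 1) / (4 * (n : ℝ) + 1) := by positivity
  constructor
  · have hlt := hasSum_lt (i := 1)
      (fun n ↦ mul_le_mul_of_nonneg_right (half_mul_inv_sqrt_le_multichoose_half n) (hpos n).le)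
      (mul_lt_mul_of_pos_right (half_mul_inv_sqrt_lt_multichoose_half one_ne_zero) (hpos 1))
      (by simpa only [mul_assoc] using hlerch.mul_left (1 / 2)) harcsl
    linarith
  · exact hasSum_lt (i := 0)
      (fun n ↦ mul_le_mul_of_nonneg_right (multichoose_half_lt_inv_sqrt n).le (hpos n).le)
      (mul_lt_mul_of_pos_right (multichoose_half_lt_inv_sqrt 0) (hpos 0)) harcsl hlerch

theorem mahmoud_agarwal_bounds (x : ℝ) (hx0 : 0 < x) (hx1 : x < 1) :
    (1 / 8) * x * lerchPhi (x ^ 4) (3 / 2) (1 / 4) < arcsl x ∧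
      arcsl x < (1 / 4) * x * lerchPhi (x ^ 4) (3 / 2) (1 / 4) :=
  mahmoud_agarwal_bounds_general hx0 hx1.le
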